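/- Let n ≥ 2, α > 1, and 1 ≤ s < ∞ with (α − 1)(s − n + 1) ≥ n, and let Ω_α = {(x, y₁, …, y_{n−1}) ∈ ℝⁿ : 0 < x < 1, (y₁² + ⋯ + y_{n−1}²)^{1/2} < x^α}. Then for every point z₀ ∈ Ω_α, ∫_{Ω_α} k(z, z₀; Ω_α)^s dz = ∞. -/

import Mathlib

open MeasureTheory Metric Set
open scoped ENNReal

/-- The quasihyperbolic distance `k(z, z₀; Ω)`: the infimum, over all Lipschitz curves
`γ : [0,1] → Ω` joining `z` to `z₀`, of `∫ ‖γ'(t)‖ / d(γ(t), ∂Ω) dt`. -/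
noncomputable def qhDist {n : ℕ} (Ω : Set (EuclideanSpace ℝ (Fin n)))
    (z z₀ : EuclideanSpace ℝ (Fin n)) : ℝ :=
  sInf {L : ℝ | ∃ γ : ℝ → EuclideanSpace ℝ (Fin n),
    (∃ K : NNReal, LipschitzWith K γ) ∧ γ 0 = z ∧ γ 1 = z₀ ∧
    (∀ t ∈ Set.Icc (0:ℝ) 1, γ t ∈ Ω) ∧
    L = ∫ t in (0:ℝ)..1, ‖deriv γ t‖ / Metric.infDist (γ t) (frontier Ω)}

/-- The distance of `z` from the first coordinate axis. -/
noncomputable def radial {n : ℕ} [NeZero n] (z : EuclideanSpace ℝ (Fin n)) : ℝ :=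
  Real.sqrt (∑ i ∈ Finset.univ.erase (0 : Fin n), z i ^ 2)

/-- The cusp domain `Ω_α = {0 < x < 1, |y| < x^α} ⊆ ℝⁿ`. -/
noncomputable def cuspDomain (n : ℕ) [NeZero n] (α : ℝ) : Set (EuclideanSpace ℝ (Fin n)) :=
  {z | 0 < z 0 ∧ z 0 < 1 ∧ radial z < (z 0) ^ α}


lemma lip_of_contDiffAt {E : Type*} [NormedAddCommGroup E] [NormedSpace ℝ E] (f : ℝ → E) (a b : ℝ)
    (h : ∀ x ∈ Icc a b, ContDiffAt ℝ 1 f x) : ∃ K, LipschitzOnWith K f (Icc a b) := by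
  apply LocallyLipschitzOn.exists_lipschitzOnWith_of_compact isCompact_Icc
  intro x hx
  obtain ⟨K, t, ht, hK⟩ := (h x hx).exists_lipschitzOnWith
  exact ⟨K, t, mem_nhdsWithin_of_mem_nhds ht, hK⟩

lemma radial_eq {n : ℕ} [NeZero n] (z v : EuclideanSpace ℝ (Fin n)) (h0 : v 0 = 0)
    (h : ∀ i, i ≠ 0 → z i = v i) : radial z = ‖v‖ := by
  rw [EuclideanSpace.norm_eq, radial]
  congr 1
  rw [← Finset.add_sum_erase _ _ (Finset.mem_univ (0 : Fin n)), h0]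
  simp only [norm_zero, Real.norm_eq_abs, sq_abs]
  rw [zero_pow two_ne_zero, zero_add]
  apply Finset.sum_congr rfl
  intro i hi
  rw [h i (Finset.ne_of_mem_erase hi)]

noncomputable def perp {n : ℕ} [NeZero n] (z : EuclideanSpace ℝ (Fin n)) :
    EuclideanSpace ℝ (Fin n) := z - EuclideanSpace.single 0 (z 0)

lemma perp_zero {n : ℕ} [NeZero n] (z : EuclideanSpace ℝ (Fin n)) : perp z 0 = 0 := by
  simp [perp]

lemma perp_ne {n : ℕ} [NeZero n] (z : EuclideanSpace ℝ (Fin n)) (i : Fin n) (hi : i ≠ 0) :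
    perp z i = z i := by
  simp [perp, hi]

lemma radial_perp {n : ℕ} [NeZero n] (z : EuclideanSpace ℝ (Fin n)) : radial z = ‖perp z‖ :=
  radial_eq z _ (perp_zero z) (fun i hi => (perp_ne z i hi).symm)

lemma isOpen_cusp (n : ℕ) [NeZero n] (α : ℝ) (hα : 1 < α) : IsOpen (cuspDomain n α) := by
  have h1 : Continuous (fun z : EuclideanSpace ℝ (Fin n) => z 0) := by fun_prop
  have h2 : Continuous (fun z : EuclideanSpace ℝ (Fin n) => radial z) := by
    unfold radial; fun_prop
  have h3 : Continuous (fun z : EuclideanSpace ℝ (Fin n) => (z 0) ^ α) :=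
    h1.rpow_const (fun _ => Or.inr (by linarith))
  exact (isOpen_lt continuous_const h1).inter
    ((isOpen_lt h1 continuous_const).inter (isOpen_lt h2 h3))

lemma exists_frontier (n : ℕ) [NeZero n] (hn : 2 ≤ n) (α : ℝ)
    (z : EuclideanSpace ℝ (Fin n)) (hz : z ∈ cuspDomain n α) :
    ∃ w ∈ frontier (cuspDomain n α), dist z w ≤ 2 * (z 0) ^ α := by
  obtain ⟨h0, h1, hr⟩ := hz
  set x := z 0 with hx
  have hxa : 0 < x ^ α := Real.rpow_pos_of_pos h0 α
  let i1 : Fin n := ⟨1, hn⟩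
  have hi1 : (0 : Fin n) ≠ i1 := by
    intro h; have := congrArg Fin.val h; simp [i1] at this
  let e : EuclideanSpace ℝ (Fin n) := EuclideanSpace.single i1 (x ^ α)
  have he : ‖e‖ = x ^ α := by simp [e, abs_of_pos hxa]
  have he0 : e 0 = 0 := by simp [e, hi1]
  let f : ℝ → EuclideanSpace ℝ (Fin n) := fun t => EuclideanSpace.single 0 x + t • e
  have hf0 : ∀ t, f t 0 = x := by intro t; simp [f, he0]
  have hfr : ∀ t, radial (f t) = |t| * x ^ α := by
    intro t
    rw [radial_eq (f t) (t • e) (by simp [he0]) (by intro i hi; simp [f, hi]), norm_smul, he,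
      Real.norm_eq_abs]
  refine ⟨f 1, ⟨?_, ?_⟩, ?_⟩
  · have hc : Continuous f := by fun_prop
    have h1c : (1:ℝ) ∈ closure (Ico (0:ℝ) 1) := by
      rw [closure_Ico (by norm_num)]; simp
    refine map_mem_closure hc h1c ?_
    intro t ht
    refine ⟨by rw [hf0]; exact h0, by rw [hf0]; exact h1, ?_⟩
    rw [hf0, hfr, abs_of_nonneg ht.1]
    nlinarith [ht.2]
  · intro h
    have := (interior_subset h).2.2
    rw [hf0, hfr] at this
    simp at this
  · rw [dist_eq_norm]
    have : z - f 1 = perp z - e := by simp [f, perp, ← hx]; abel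
    rw [this]
    refine (norm_sub_le _ _).trans ?_
    rw [he, ← radial_perp]
    linarith

lemma infDist_bounds (n : ℕ) [NeZero n] (hn : 2 ≤ n) (α : ℝ) (hα : 1 < α)
    (z : EuclideanSpace ℝ (Fin n)) (hz : z ∈ cuspDomain n α) :
    0 < infDist z (frontier (cuspDomain n α)) ∧
      infDist z (frontier (cuspDomain n α)) ≤ 2 * (z 0) ^ α := by
  obtain ⟨w, hw, hd⟩ := exists_frontier n hn α z hz
  refine ⟨?_, (infDist_le_dist_of_mem hw).trans hd⟩
  rw [← isClosed_frontier.notMem_iff_infDist_pos ⟨w, hw⟩]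
  intro h
  rw [(isOpen_cusp n α hα).frontier_eq] at h
  exact h.2 hz

lemma exists_curve (n : ℕ) [NeZero n] (α : ℝ)
    (z z₀ : EuclideanSpace ℝ (Fin n)) (hz : z ∈ cuspDomain n α) (hz₀ : z₀ ∈ cuspDomain n α) :
    ∃ γ : ℝ → EuclideanSpace ℝ (Fin n),
    (∃ K : NNReal, LipschitzWith K γ) ∧ γ 0 = z ∧ γ 1 = z₀ ∧
    (∀ t ∈ Set.Icc (0:ℝ) 1, γ t ∈ cuspDomain n α) := by
  obtain ⟨h0, h1, hr⟩ := hz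
  obtain ⟨h0', h1', hr'⟩ := hz₀
  have hxa : 0 < (z 0) ^ α := Real.rpow_pos_of_pos h0 α
  have hxa' : 0 < (z₀ 0) ^ α := Real.rpow_pos_of_pos h0' α
  let x : ℝ → ℝ := fun t => (1 - t) * z 0 + t * z₀ 0
  let u : ℝ → EuclideanSpace ℝ (Fin n) := fun t =>
    (1 - t) • (((z 0) ^ α)⁻¹ • perp z) + t • (((z₀ 0) ^ α)⁻¹ • perp z₀)
  let g : ℝ → EuclideanSpace ℝ (Fin n) := fun t =>
    x t • EuclideanSpace.single 0 1 + (x t) ^ α • u t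
  have hxpos : ∀ t ∈ Icc (0:ℝ) 1, 0 < x t := by
    intro t ht
    rcases eq_or_lt_of_le ht.1 with h | h
    · simp [x, ← h, h0]
    · have := mul_nonneg (sub_nonneg.2 ht.2) h0.le
      have := mul_pos h h0'
      simp only [x]; linarith
  have hx1 : ∀ t ∈ Icc (0:ℝ) 1, x t < 1 := by
    intro t ht
    rcases eq_or_lt_of_le ht.1 with h | h
    · simp [x, ← h, h1]
    · have := mul_nonneg (sub_nonneg.2 ht.2) (sub_nonneg.2 h1.le)
      have := mul_pos h (sub_pos.2 h1')
      simp only [x]; nlinarith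
  have hu0 : ∀ t, u t 0 = 0 := by intro t; simp [u, perp_zero]
  have hg0 : ∀ t, g t 0 = x t := by intro t; simp [g, hu0]
  have hun : ∀ t ∈ Icc (0:ℝ) 1, ‖u t‖ < 1 := by
    intro t ht
    have ha : ‖((z 0) ^ α)⁻¹ • perp z‖ < 1 := by
      rw [norm_smul, ← radial_perp, norm_inv, Real.norm_of_nonneg hxa.le, inv_mul_lt_one₀ hxa]
      exact hr
    have hb : ‖((z₀ 0) ^ α)⁻¹ • perp z₀‖ < 1 := by
      rw [norm_smul, ← radial_perp, norm_inv, Real.norm_of_nonneg hxa'.le, inv_mul_lt_one₀ hxa']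
      exact hr'
    have := (convex_ball (0 : EuclideanSpace ℝ (Fin n)) 1)
      (mem_ball_zero_iff.2 ha) (mem_ball_zero_iff.2 hb) (sub_nonneg.2 ht.2) ht.1 (by ring)
    exact mem_ball_zero_iff.1 this
  have hgm : ∀ t ∈ Icc (0:ℝ) 1, g t ∈ cuspDomain n α := by
    intro t ht
    have hp : 0 < (x t) ^ α := Real.rpow_pos_of_pos (hxpos t ht) α
    refine ⟨by rw [hg0]; exact hxpos t ht, by rw [hg0]; exact hx1 t ht, ?_⟩
    rw [hg0, radial_eq (g t) ((x t) ^ α • u t) (by simp [hu0]) (by intro i hi; simp [g, hi]),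
      norm_smul, Real.norm_of_nonneg hp.le]
    nlinarith [hun t ht]
  have hgc : ∀ t ∈ Icc (0:ℝ) 1, ContDiffAt ℝ 1 g t := by
    intro t ht
    have hxc : ContDiffAt ℝ 1 x t := by simp only [x]; fun_prop
    have huc : ContDiffAt ℝ 1 u t := by simp only [u]; fun_prop
    exact (hxc.smul contDiffAt_const).add
      ((hxc.rpow_const_of_ne (hxpos t ht).ne').smul huc)
  obtain ⟨K, hK⟩ := lip_of_contDiffAt g 0 1 hgc
  refine ⟨fun t => g (projIcc 0 1 zero_le_one t), ⟨K, ?_⟩, ?_, ?_, ?_⟩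
  · have := hK.to_restrict.comp (LipschitzWith.projIcc (zero_le_one (α := ℝ)))
    rw [mul_one] at this
    exact this
  · have h : z 0 • EuclideanSpace.single (0 : Fin n) (1:ℝ) = EuclideanSpace.single 0 (z 0) := by
      ext i; simp
    simp [g, x, u, hxa.ne', perp, smul_smul, h]
  · have h : z₀ 0 • EuclideanSpace.single (0 : Fin n) (1:ℝ) = EuclideanSpace.single 0 (z₀ 0) := by
      ext i; simp
    simp [g, x, u, hxa'.ne', perp, smul_smul, h]
  · intro t ht
    exact hgm _ (projIcc 0 1 zero_le_one t).2

lemma length_lower (n : ℕ) [NeZero n] (hn : 2 ≤ n) (α : ℝ) (hα : 1 < α)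
    (γ : ℝ → EuclideanSpace ℝ (Fin n)) (K : NNReal) (hK : LipschitzWith K γ)
    (hγ : ∀ t ∈ Set.Icc (0:ℝ) 1, γ t ∈ cuspDomain n α) :
    ((γ 0 0) ^ (1 - α) - (γ 1 0) ^ (1 - α)) / (2 * (α - 1)) ≤
      ∫ t in (0:ℝ)..1, ‖deriv γ t‖ / Metric.infDist (γ t) (frontier (cuspDomain n α)) := by
  have ha : 0 < α - 1 := by linarith
  let x : ℝ → ℝ := fun t => γ t 0
  have hxl : LipschitzWith K x := by
    have : LipschitzWith 1 (fun z : EuclideanSpace ℝ (Fin n) => z 0) := by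
      apply LipschitzWith.of_dist_le_mul
      intro a b
      rw [Real.dist_eq, dist_eq_norm]
      simpa using PiLp.norm_apply_le (a - b) 0
    have h := this.comp hK
    rw [one_mul] at h
    exact h
  have hxp : ∀ t ∈ Icc (0:ℝ) 1, 0 < x t := fun t ht => (hγ t ht).1
  let F : ℝ → ℝ := fun r => -(r ^ (1 - α)) / (2 * (α - 1))
  have hFd : ∀ r, 0 < r → HasDerivAt F (1 / (2 * r ^ α)) r := by
    intro r hr
    have := ((Real.hasDerivAt_rpow_const (p := 1 - α) (Or.inl hr.ne')).neg).div_const (2 * (α - 1))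
    refine HasDerivAt.congr_deriv this ?_
    have h2 : r ^ (1 - α - 1) = (r ^ α)⁻¹ := by
      rw [← Real.rpow_neg hr.le]; congr 1; ring
    rw [h2]
    have : r ^ α ≠ 0 := (Real.rpow_pos_of_pos hr α).ne'
    field_simp
    ring
  obtain ⟨tm, htm, hmin⟩ := isCompact_Icc.exists_isMinOn (s := Icc (0:ℝ) 1) ⟨0, by simp⟩
    hxl.continuous.continuousOn
  obtain ⟨KF, hKF⟩ := lip_of_contDiffAt F (x tm) 1 (by
    intro r hr
    have hr0 : 0 < r := (hxp tm htm).trans_le hr.1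
    exact ((contDiffAt_id.rpow_const_of_ne hr0.ne').neg).div_const _)
  have hFx : LipschitzOnWith (KF * K) (F ∘ x) (Icc 0 1) :=
    hKF.comp (hxl.lipschitzOnWith) (fun t ht => ⟨hmin ht, (hγ t ht).2.1.le⟩)
  have hac : AbsolutelyContinuousOnInterval (F ∘ x) 0 1 := by
    apply LipschitzOnWith.absolutelyContinuousOnInterval (K := KF * K)
    rw [uIcc_of_le zero_le_one]; exact hFx
  have hftc := hac.integral_deriv_eq_sub
  have hval : ((γ 0 0) ^ (1 - α) - (γ 1 0) ^ (1 - α)) / (2 * (α - 1)) = (F ∘ x) 1 - (F ∘ x) 0 := by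
    simp only [F, x, Function.comp]; ring
  rw [hval, ← hftc]
  -- integrability
  have hdc : Continuous (fun t => infDist (γ t) (frontier (cuspDomain n α))) :=
    (continuous_infDist_pt _).comp hK.continuous
  obtain ⟨td, htd, hdmin⟩ := isCompact_Icc.exists_isMinOn (s := Icc (0:ℝ) 1) ⟨0, by simp⟩
    hdc.continuousOn
  have hdpos := (infDist_bounds n hn α hα _ (hγ td htd)).1
  have hint : IntervalIntegrable
      (fun t => ‖deriv γ t‖ / infDist (γ t) (frontier (cuspDomain n α))) volume 0 1 := by
    rw [intervalIntegrable_iff_integrableOn_Icc_of_le zero_le_one]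
    apply Measure.integrableOn_of_bounded
      (M := K / infDist (γ td) (frontier (cuspDomain n α)))
    · simp
    · exact ((measurable_deriv γ).norm.div hdc.measurable).aestronglyMeasurable
    · filter_upwards [ae_restrict_mem measurableSet_Icc] with t ht
      rw [Real.norm_of_nonneg (div_nonneg (norm_nonneg _) infDist_nonneg)]
      exact div_le_div₀ K.2 (norm_deriv_le_of_lipschitz hK) hdpos (hdmin ht)
  apply intervalIntegral.integral_mono_ae_restrict zero_le_one hac.intervalIntegrable_deriv hint
  have hdiff : ∀ᵐ t : ℝ, DifferentiableAt ℝ γ t := hK.ae_differentiableAt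
  filter_upwards [ae_restrict_of_ae hdiff, ae_restrict_mem measurableSet_Icc] with t hd ht
  have hxd : HasDerivAt x (deriv γ t 0) t := by
    have := (EuclideanSpace.proj (𝕜 := ℝ) (0 : Fin n)).hasFDerivAt.comp_hasDerivAt t hd.hasDerivAt
    exact this
  have hxt := hxp t ht
  have hd2 := ((hFd (x t) hxt).comp t hxd).deriv
  simp only [Function.comp_def] at hd2 ⊢
  rw [hd2]
  obtain ⟨hb1, hb2⟩ := infDist_bounds n hn α hα _ (hγ t ht)
  have hle : deriv γ t 0 ≤ ‖deriv γ t‖ :=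
    (le_abs_self _).trans (PiLp.norm_apply_le (deriv γ t) 0)
  have hp : 0 < 2 * (x t) ^ α := mul_pos two_pos (Real.rpow_pos_of_pos hxt α)
  calc 1 / (2 * (x t) ^ α) * deriv γ t 0 ≤ 1 / (2 * (x t) ^ α) * ‖deriv γ t‖ := by gcongr
    _ = ‖deriv γ t‖ / (2 * (x t) ^ α) := by ring
    _ ≤ _ := div_le_div_of_nonneg_left (norm_nonneg _) hb1 hb2

lemma qh_lower (n : ℕ) [NeZero n] (hn : 2 ≤ n) (α : ℝ) (hα : 1 < α)
    (z z₀ : EuclideanSpace ℝ (Fin n)) (hz : z ∈ cuspDomain n α) (hz₀ : z₀ ∈ cuspDomain n α) :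
    ((z 0) ^ (1 - α) - (z₀ 0) ^ (1 - α)) / (2 * (α - 1)) ≤ qhDist (cuspDomain n α) z z₀ := by
  apply le_csInf
  · obtain ⟨γ, h1, h2, h3, h4⟩ := exists_curve n α z z₀ hz hz₀
    exact ⟨_, γ, h1, h2, h3, h4, rfl⟩
  · rintro L ⟨γ, ⟨K, hK⟩, h2, h3, h4, rfl⟩
    have := length_lower n hn α hα γ K hK h4
    rwa [h2, h3] at this

noncomputable def cuspBox (n : ℕ) [NeZero n] (α r : ℝ) : Set (EuclideanSpace ℝ (Fin n)) :=
  {z | ∀ i, z i ∈ (if i = 0 then Ioo (r / 2) r else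
    Ioo (-((r / 2) ^ α / n)) ((r / 2) ^ α / n))}

lemma cuspBox_eq (n : ℕ) [NeZero n] (α r : ℝ) : cuspBox n α r =
    (WithLp.ofLp : EuclideanSpace ℝ (Fin n) → (Fin n → ℝ)) ⁻¹' (univ.pi
      (fun i => (if i = 0 then Ioo (r / 2) r else
    Ioo (-((r / 2) ^ α / n)) ((r / 2) ^ α / n)))) := by
  ext z; simp [cuspBox]

lemma box_meas (n : ℕ) [NeZero n] (α r : ℝ) : MeasurableSet (univ.pi
      (fun i : Fin n => (if i = 0 then Ioo (r / 2) r else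
    Ioo (-((r / 2) ^ α / n)) ((r / 2) ^ α / n)))) := by
  apply MeasurableSet.univ_pi
  intro i
  split_ifs <;> exact measurableSet_Ioo

lemma cuspBox_meas (n : ℕ) [NeZero n] (α r : ℝ) : MeasurableSet (cuspBox n α r) := by
  rw [cuspBox_eq]
  exact (PiLp.volume_preserving_ofLp (Fin n)).measurable (box_meas n α r)

lemma cuspBox_volume (n : ℕ) [NeZero n] (α r : ℝ) (hr : 0 < r) : volume (cuspBox n α r) =
    ENNReal.ofReal (r / 2 * (2 * ((r / 2) ^ α / n)) ^ (n - 1)) := by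
  rw [cuspBox_eq, (PiLp.volume_preserving_ofLp (Fin n)).measure_preimage
    (box_meas n α r).nullMeasurableSet, volume_pi_pi,
    ← Finset.mul_prod_erase _ _ (Finset.mem_univ (0 : Fin n))]
  have : ∀ i ∈ Finset.univ.erase (0 : Fin n), volume ((if i = 0 then Ioo (r / 2) r else
    Ioo (-((r / 2) ^ α / n)) ((r / 2) ^ α / n))) = ENNReal.ofReal (2 * ((r / 2) ^ α / n)) := by
    intro i hi
    rw [if_neg (Finset.ne_of_mem_erase hi), Real.volume_Ioo]
    congr 1; ring
  rw [Finset.prod_congr rfl this, Finset.prod_const, if_pos rfl, Real.volume_Ioo,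
    Finset.card_erase_of_mem (Finset.mem_univ _), Finset.card_univ, Fintype.card_fin,
    ENNReal.ofReal_mul (p := r / 2) (by positivity), ENNReal.ofReal_pow (by positivity)]
  congr 2; ring

lemma cuspBox_subset (n : ℕ) [NeZero n] (α : ℝ) (hα : 1 < α) (r : ℝ) (hr : 0 < r) (hr1 : r ≤ 1) :
    cuspBox n α r ⊆ cuspDomain n α := by
  intro z hz
  have h0 := hz 0
  rw [if_pos rfl] at h0
  have hx : 0 < z 0 := (half_pos hr).trans h0.1
  refine ⟨hx, h0.2.trans_le hr1, ?_⟩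
  have hρ : 0 < (r / 2) ^ α := by positivity
  refine lt_of_le_of_lt ?_ (Real.rpow_lt_rpow (half_pos hr).le h0.1 (by linarith))
  have hn0 : (0:ℝ) < n := by exact_mod_cast Nat.pos_of_ne_zero (NeZero.ne n)
  have hn1 : (1:ℝ) ≤ n := by exact_mod_cast Nat.pos_of_ne_zero (NeZero.ne n)
  rw [radial]
  apply Real.sqrt_le_iff.2 ⟨hρ.le, ?_⟩
  calc ∑ i ∈ Finset.univ.erase (0 : Fin n), z i ^ 2
      ≤ ∑ i ∈ Finset.univ.erase (0 : Fin n), ((r / 2) ^ α / n) ^ 2 := by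
        apply Finset.sum_le_sum
        intro i hi
        have := hz i
        rw [if_neg (Finset.ne_of_mem_erase hi)] at this
        exact sq_le_sq' this.1.le this.2.le
    _ ≤ ∑ i : Fin n, ((r / 2) ^ α / n) ^ 2 :=
        Finset.sum_le_sum_of_subset_of_nonneg (Finset.subset_univ _) (fun _ _ _ => by positivity)
    _ = ((r / 2) ^ α) ^ 2 / n := by
        rw [Finset.sum_const, Finset.card_univ, Fintype.card_fin, nsmul_eq_mul]
        field_simp
    _ ≤ ((r / 2) ^ α) ^ 2 := div_le_self (by positivity) hn1

lemma box_integral (n : ℕ) [NeZero n] (hn : 2 ≤ n) (α : ℝ) (hα : 1 < α)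
    (s : ℝ) (hs : 1 ≤ s) (hcond : (n : ℝ) ≤ (α - 1) * (s - n + 1))
    (z₀ : EuclideanSpace ℝ (Fin n)) (hz₀ : z₀ ∈ cuspDomain n α) (r : ℝ) (hr : 0 < r) (hr1 : r ≤ 1)
    (hr2 : 2 * (z₀ 0) ^ (1 - α) ≤ r ^ (1 - α)) :
    ENNReal.ofReal ((1 / (4 * (α - 1))) ^ s * (1 / 2 * (2 * ((1 / 2) ^ α / n)) ^ (n - 1))) ≤
    ∫⁻ z in cuspBox n α r, ENNReal.ofReal (qhDist (cuspDomain n α) z z₀ ^ s) := by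
  have ha : 0 < α - 1 := by linarith
  have hn0 : (0:ℝ) < n := by exact_mod_cast Nat.pos_of_ne_zero (NeZero.ne n)
  have hk : ∀ z ∈ cuspBox n α r, ENNReal.ofReal ((1 / (4 * (α - 1)) * r ^ (1 - α)) ^ s) ≤
      ENNReal.ofReal (qhDist (cuspDomain n α) z z₀ ^ s) := by
    intro z hz
    apply ENNReal.ofReal_le_ofReal
    apply Real.rpow_le_rpow (by positivity) _ (by linarith)
    refine le_trans ?_ (qh_lower n hn α hα z z₀ (cuspBox_subset n α hα r hr hr1 hz) hz₀)
    have h0 := hz 0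
    rw [if_pos rfl] at h0
    have : r ^ (1 - α) ≤ (z 0) ^ (1 - α) :=
      Real.rpow_le_rpow_of_nonpos ((half_pos hr).trans h0.1) h0.2.le (by linarith)
    rw [le_div_iff₀ (by positivity)]
    have e : 1 / (4 * (α - 1)) * r ^ (1 - α) * (2 * (α - 1)) = r ^ (1 - α) / 2 := by
      field_simp; norm_num
    rw [e]; linarith
  refine le_trans ?_ (setLIntegral_mono' (cuspBox_meas n α r) hk)
  rw [setLIntegral_const, cuspBox_volume n α r hr, ← ENNReal.ofReal_mul (by positivity)]
  apply ENNReal.ofReal_le_ofReal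
  have e1 : (1 / (4 * (α - 1)) * r ^ (1 - α)) ^ s = (1 / (4 * (α - 1))) ^ s * r ^ ((1 - α) * s) := by
    rw [Real.mul_rpow (by positivity) (by positivity), ← Real.rpow_mul hr.le]
  have e2 : (2 * ((r / 2) ^ α / n)) ^ (n - 1) =
      (2 * ((1 / 2) ^ α / n)) ^ (n - 1) * r ^ (α * (n - 1)) := by
    have : (r / 2) ^ α = (1 / 2) ^ α * r ^ α := by
      rw [← Real.mul_rpow (by norm_num) hr.le]; congr 1; ring
    have e3 : r ^ (α * ((n:ℝ) - 1)) = (r ^ α) ^ (n - 1) := by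
      rw [Real.rpow_mul hr.le, ← Real.rpow_natCast, Nat.cast_sub (by omega), Nat.cast_one]
    rw [this, e3, ← mul_pow]; congr 1; ring
  have e4 : 1 ≤ r ^ ((1 - α) * s) * r * r ^ (α * ((n:ℝ) - 1)) := by
    have : r ^ ((1 - α) * s) * r * r ^ (α * ((n:ℝ) - 1))
      = r ^ ((1 - α) * s + 1 + α * ((n:ℝ) - 1)) := by
      rw [Real.rpow_add hr, Real.rpow_add hr, Real.rpow_one]
    rw [this]
    exact Real.one_le_rpow_of_pos_of_le_one_of_nonpos hr hr1 (by nlinarith)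
  rw [e1, e2]
  have hC : 0 ≤ (1 / (4 * (α - 1))) ^ s * (1 / 2 * (2 * ((1 / 2) ^ α / (n:ℝ))) ^ (n - 1)) := by
    positivity
  calc _ ≤ ((1 / (4 * (α - 1))) ^ s * (1 / 2 * (2 * ((1 / 2) ^ α / (n:ℝ))) ^ (n - 1))) *
      (r ^ ((1 - α) * s) * r * r ^ (α * ((n:ℝ) - 1))) := le_mul_of_one_le_right hC e4
    _ = _ := by ring

/-- If `(α − 1)(s − n + 1) ≥ n` (with `α > 1`), the `L^s`-integral
of the quasihyperbolic distance over the cusp `Ω_α` is infinite for every base point. -/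
theorem cusp_qh_integral_infinite (n : ℕ) [NeZero n] (hn : 2 ≤ n) (α : ℝ) (hα : 1 < α)
    (s : ℝ) (hs : 1 ≤ s) (hcond : (n : ℝ) ≤ (α - 1) * (s - n + 1)) :
    ∀ z₀ ∈ cuspDomain n α,
      ∫⁻ z in cuspDomain n α, ENNReal.ofReal (qhDist (cuspDomain n α) z z₀ ^ s) = ⊤ := by
  intro z₀ hz₀
  have ha : 0 < α - 1 := by linarith
  have hx0 := hz₀.1
  have hx1 := hz₀.2.1
  have hn0 : (0:ℝ) < n := by exact_mod_cast Nat.pos_of_ne_zero (NeZero.ne n)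
  set δ : ℝ := z₀ 0 * 2 ^ (-(1 / (α - 1))) with hδ
  have hδ0 : 0 < δ := by positivity
  have hδ1 : δ ≤ 1 := by
    have : (2:ℝ) ^ (-(1 / (α - 1))) ≤ 1 :=
      Real.rpow_le_one_of_one_le_of_nonpos (by norm_num)
        (by have : 0 < 1 / (α - 1) := by positivity
            linarith)
    have h2 : (0:ℝ) < (2:ℝ) ^ (-(1 / (α - 1))) := by positivity
    nlinarith
  have hδ2 : δ ^ (1 - α) = 2 * (z₀ 0) ^ (1 - α) := by
    rw [hδ, Real.mul_rpow hx0.le (by positivity), ← Real.rpow_mul (by norm_num)]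
    have : -(1 / (α - 1)) * (1 - α) = 1 := by field_simp; ring
    rw [this, Real.rpow_one, mul_comm]
  let r : ℕ → ℝ := fun j => δ * (1 / 2) ^ j
  have hr0 : ∀ j, 0 < r j := fun j => by positivity
  have hrδ : ∀ j, r j ≤ δ := fun j =>
    mul_le_of_le_one_right hδ0.le (pow_le_one₀ (by norm_num) (by norm_num))
  have hlt : ∀ i j, i < j → r j ≤ r i / 2 := by
    intro i j hij
    have : (1 / 2 : ℝ) ^ j ≤ (1 / 2) ^ (i + 1) :=
      pow_le_pow_of_le_one (by norm_num) (by norm_num) hij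
    simp only [r]
    rw [pow_succ] at this
    nlinarith
  have hdisj0 : ∀ i j, i < j → Disjoint (cuspBox n α (r i)) (cuspBox n α (r j)) := by
    intro i j hij
    rw [Set.disjoint_left]
    intro z h1 h2
    have a1 := h1 0
    have a2 := h2 0
    rw [if_pos rfl] at a1 a2
    linarith [a1.1, a2.2, hlt i j hij]
  have hdisj : Pairwise (fun i j => Disjoint (cuspBox n α (r i)) (cuspBox n α (r j))) := by
    intro i j hij
    rcases lt_or_gt_of_ne hij with h | h
    · exact hdisj0 i j h
    · exact (hdisj0 j i h).symm
  have hsub : (⋃ j, cuspBox n α (r j)) ⊆ cuspDomain n α :=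
    iUnion_subset fun j => cuspBox_subset n α hα _ (hr0 j) ((hrδ j).trans hδ1)
  rw [eq_top_iff]
  refine le_trans ?_ (lintegral_mono_set hsub)
  rw [lintegral_iUnion (fun j => cuspBox_meas n α (r j)) hdisj]
  refine le_trans ?_ (ENNReal.tsum_le_tsum fun j =>
    box_integral n hn α hα s hs hcond z₀ hz₀ (r j) (hr0 j) ((hrδ j).trans hδ1) (by
      rw [← hδ2]
      exact Real.rpow_le_rpow_of_nonpos (hr0 j) (hrδ j) (by linarith)))
  rw [ENNReal.tsum_const_eq_top_of_ne_zero]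
  rw [← pos_iff_ne_zero, ENNReal.ofReal_pos]
  positivity
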